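/- Let Y be a real Banach space with the Daugavet property. Then there exist convex, closed, bounded, symmetric (i.e., C = −C) SCD sets C₁, C₂ ⊂ Y such that the Minkowski sum C₁ + C₂ is not SCD. -/

import Mathlib

open Bornology Set Pointwise

variable {X : Type*} [NormedAddCommGroup X] [NormedSpace ℝ X]

/-- The sliceSet of `A` given by the functional `f` and `ε > 0`. -/
noncomputable def sliceSet (A : Set X) (f : X →L[ℝ] ℝ) (ε : ℝ) : Set X :=
  {x ∈ A | sSup (f '' A) - ε < f x}

/-- `S` is a sliceSet of `A`: a nonempty set of the form `sliceSet A f ε` with `f ≠ 0`, `ε > 0`. -/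
def IsSlice (A S : Set X) : Prop :=
  S.Nonempty ∧ ∃ f : X →L[ℝ] ℝ, f ≠ 0 ∧ ∃ ε : ℝ, 0 < ε ∧ S = sliceSet A f ε

/-- A sequence of subsets of `A` is determining if every set `B` meeting all of them
has `A` inside the closed convex hull of `B`. -/
def Determining (A : Set X) (V : ℕ → Set X) : Prop :=
  ∀ B : Set X, (∀ n, (B ∩ V n).Nonempty) → A ⊆ closure (convexHull ℝ B)

/-- A bounded set is slicely countably determined if it has a determining sequence of slices. -/
def IsSCD (A : Set X) : Prop :=
  ∃ V : ℕ → Set X, (∀ n, IsSlice A (V n)) ∧ Determining A V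

/-- The Daugavet property: every rank-one operator `x ↦ f x • y` satisfies the
Daugavet equation `‖Id + T‖ = 1 + ‖T‖`. -/
def DaugavetProperty (X : Type*) [NormedAddCommGroup X] [NormedSpace ℝ X] : Prop :=
  ∀ (f : X →L[ℝ] ℝ) (y : X),
    ‖ContinuousLinearMap.id ℝ X + f.smulRight y‖ = 1 + ‖f.smulRight y‖

/-!
A hyperplane of a Daugavet space `Y` is again Daugavet, even for centres in all of `Y`. Hence one
can build inductively a countable symmetric subset `A = {x k}` of the unit ball that is Daugavet
for centres in its own span, and sequences `a`, `b` of small vectors with functionals biorthogonal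
to them which vanish on `A`. Put `C₁` for the closed symmetric convex hull of the points
`x k + (1 - tₙ) • a i + tₙ • b n`, where every pair `(k, i)` occurs for infinitely many `n` and
`tₙ → 0`; exchanging `a` and `b` gives `C₂`. The functionals of `b` (of `a` for `C₂`) strongly
expose the generating points, so both sets are SCD.

A functional `f` almost attains its supremum over all `±a i` and `±b i` at one of the two families.
If it does at `v = ±a i`, then `f` almost attains its supremum over `C₁` on `A + v ⊆ C₁`, and
therefore a slice of `C₁ + C₂` contains a translate, by a vector `r` of norm little more than `1`,
of a slice of `A`. Given countably many slices, the Daugavet property of `A` provides `y n + r n` in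
the `n`-th one such that `y` is almost isometric to the basis of `ℓ¹` on the positive cone. Every
convex combination of the `y n` then has distance about `3` from `-2 • y 0`, which `C₁ + C₂` almost
contains, so adding the `r n` cannot bring it close: the slices are not determining.
-/

/-! ### Hulls, segments and real functionals -/

theorem apply_le_norm_of_norm_le_one (f : X →L[ℝ] ℝ) {x : X} (hx : ‖x‖ ≤ 1) : f x ≤ ‖f‖ :=
  (le_abs_self _).trans (f.unit_le_opNorm x hx)

theorem exists_norm_le_one_lt_apply (f : X →L[ℝ] ℝ) {r : ℝ} (hr : r < ‖f‖) :
    ∃ x, ‖x‖ ≤ 1 ∧ r < f x := by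
  obtain ⟨x, hx, hrx⟩ := f.exists_lt_apply_of_lt_opNorm hr
  rcases lt_abs.1 hrx with hpos | hneg
  · exact ⟨x, hx.le, hpos⟩
  · exact ⟨-x, (norm_neg x).trans_le hx.le, by rwa [map_neg]⟩

theorem exists_norm_eq_one_norm_smul_eq [Nontrivial X] (x : X) :
    ∃ w : X, ‖w‖ = 1 ∧ ‖x‖ • w = x := by
  rcases eq_or_ne x 0 with rfl | hx
  · obtain ⟨w, hw⟩ := exists_norm_eq X zero_le_one
    exact ⟨w, hw, by simp⟩
  · exact ⟨‖x‖⁻¹ • x, norm_smul_inv_norm hx, smul_inv_smul₀ (norm_ne_zero_iff.2 hx) x⟩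

theorem exists_extension_norm_le_lt_apply (N : Submodule ℝ X) (f : X →L[ℝ] ℝ) :
    ∃ F : X →L[ℝ] ℝ, (∀ x ∈ N, F x = f x) ∧
      ∀ r < ‖F‖, ∃ x ∈ N, ‖x‖ ≤ 1 ∧ r < F x := by
  obtain ⟨F, hF, hnorm⟩ := exists_extension_norm_eq N (f.comp N.subtypeL)
  refine ⟨F, fun x hx => hF ⟨x, hx⟩, fun r hr => ?_⟩
  obtain ⟨x, hx, hrx⟩ := exists_norm_le_one_lt_apply _ (hr.trans_eq hnorm)
  exact ⟨x, x.2, hx, hrx.trans_eq (hF x).symm⟩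

theorem apply_le_of_mem_closedConvexHull {D : Set X} {f : X →L[ℝ] ℝ} {M : ℝ}
    (hD : ∀ y ∈ D, f y ≤ M) {x : X} (hx : x ∈ closedConvexHull ℝ D) : f x ≤ M :=
  closedConvexHull_min hD (convex_halfSpace_le f.toLinearMap.isLinear _)
    (isClosed_le f.continuous continuous_const) hx

theorem mem_closedConvexHull_iff_forall_lt {D : Set X} {x : X} :
    x ∈ closedConvexHull ℝ D ↔ ∀ f : X →L[ℝ] ℝ, ∀ ε > 0, ∃ y ∈ D, f x - ε < f y := by
  constructor
  · intro hx f ε hε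
    by_contra! hD
    linarith [apply_le_of_mem_closedConvexHull hD hx]
  · intro h
    by_contra hx
    obtain ⟨f, u, hu, hux⟩ :=
      geometric_hahn_banach_closed_point convex_closedConvexHull isClosed_closedConvexHull hx
    obtain ⟨y, hy, hfy⟩ := h f (f x - u) (sub_pos.2 hux)
    linarith [hu y (subset_closedConvexHull hy)]

theorem exists_mem_segment_abs_apply_le (φ : X →L[ℝ] ℝ) {x y : X} {η : ℝ} (hη : 0 ≤ η)
    (hx : -η ≤ φ x) (hy : φ y ≤ η) : ∃ p ∈ segment ℝ x y, |φ p| ≤ η := by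
  obtain ⟨c, hc, hcη⟩ : ∃ c ∈ segment ℝ (φ x) (φ y), |c| ≤ η := by
    rcases le_or_gt (φ x) 0 with hx0 | hx0
    · exact ⟨φ x, left_mem_segment _ _ _, abs_le.2 ⟨hx, hx0.trans hη⟩⟩
    rcases le_or_gt 0 (φ y) with hy0 | hy0
    · exact ⟨φ y, right_mem_segment _ _ _, abs_le.2 ⟨by linarith, hy⟩⟩
    · refine ⟨0, ?_, by rwa [abs_zero]⟩
      rw [segment_symm, segment_eq_Icc (hy0.trans hx0).le]
      exact ⟨hy0.le, hx0.le⟩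
  obtain ⟨p, hp, rfl⟩ := (image_segment ℝ φ.toLinearMap.toAffineMap x y).ge hc
  exact ⟨p, hp, hcη⟩

-- A functional norming `∑ y i - z` must be almost norming on every summand.
theorem one_add_norm_sub_le_of_mem_convexHull {ι : Type*} {t : Finset ι} {y : ι → X} {z : X}
    {η : ℝ} (hy : ∀ i ∈ t, ‖y i‖ ≤ 1) (hsum : t.card + ‖z‖ - η ≤ ‖∑ i ∈ t, y i - z‖)
    {p : X} (hp : p ∈ convexHull ℝ (y '' t)) : 1 + ‖z‖ - η ≤ ‖p - z‖ := by
  obtain ⟨g, hg, hgsum⟩ := exists_dual_vector'' ℝ (∑ i ∈ t, y i - z)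
  have hg_le (w : X) : g w ≤ ‖w‖ :=
    (le_abs_self _).trans ((g.le_of_opNorm_le hg w).trans_eq (one_mul _))
  have hgy : ∀ i ∈ t, 1 + ‖z‖ - η + g z ≤ g (y i) := by
    intro i hi
    have hdefect : 1 - g (y i) ≤ ∑ j ∈ t, (1 - g (y j)) :=
      Finset.single_le_sum (f := fun j => 1 - g (y j))
        (fun j hj => sub_nonneg.2 ((hg_le _).trans (hy j hj))) hi
    have hgsum' : ∑ j ∈ t, g (y j) - g z = ‖∑ i ∈ t, y i - z‖ := by
      rw [← map_sum, ← map_sub]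
      exact hgsum
    rw [Finset.sum_sub_distrib, Finset.sum_const, nsmul_one] at hdefect
    linarith
  have hgp : 1 + ‖z‖ - η + g z ≤ g p :=
    convexHull_min (t := {w | 1 + ‖z‖ - η + g z ≤ g w}) (image_subset_iff.2 hgy)
      (convex_halfSpace_ge g.toLinearMap.isLinear _) hp
  linarith [hg_le (p - z), map_sub g p z]

theorem one_add_norm_sub_le_of_mem_segment {x y z p : X} {η : ℝ} (hx : ‖x‖ ≤ 1) (hy : ‖y‖ ≤ 1)
    (hsum : 2 + ‖z‖ - η ≤ ‖x + y - z‖) (hp : p ∈ segment ℝ x y) : 1 + ‖z‖ - η ≤ ‖p - z‖ := by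
  refine one_add_norm_sub_le_of_mem_convexHull (t := Finset.univ) (y := ![x, y])
    (by simp [Fin.forall_fin_two, hx, hy]) (by simpa using hsum) ?_
  simpa [convexHull_pair, segment_symm ℝ y x] using hp

theorem one_sub_le_norm_of_mem_convexHull_range {y : ℕ → X} {η : ℝ} (hy : ∀ n, ‖y n‖ ≤ 1)
    (hsum : ∀ n : ℕ, n - η ≤ ‖∑ j ∈ Finset.range n, y j‖) {p : X}
    (hp : p ∈ convexHull ℝ (range y)) : 1 - η ≤ ‖p‖ := by
  have hmono : Monotone fun n : ℕ => convexHull ℝ (y '' Finset.range n) := fun m n hmn =>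
    convexHull_mono (image_mono (by exact_mod_cast Finset.range_mono hmn))
  have hsub : convexHull ℝ (range y) ⊆ ⋃ n : ℕ, convexHull ℝ (y '' Finset.range n) := by
    refine convexHull_min ?_ (hmono.directed_le.convex_iUnion fun n => convex_convexHull ℝ _)
    rintro _ ⟨n, rfl⟩
    exact mem_iUnion.2 ⟨n + 1, subset_convexHull ℝ _ (mem_image_of_mem y (by simp))⟩
  obtain ⟨n, hn⟩ := mem_iUnion.1 (hsub hp)
  simpa using one_add_norm_sub_le_of_mem_convexHull (z := 0) (fun i _ => hy i)
    (by simpa using hsum n) hn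

/-! ### Daugavet sets -/

/-- The points of `K` at almost the largest distance `1 + ‖z‖` from `z` that the unit ball
allows. -/
def farPart {E : Type*} [NormedAddCommGroup E] (K : Set E) (z : E) (ε : ℝ) : Set E :=
  {y ∈ K | 1 + ‖z‖ - ε < ‖y - z‖}

theorem farPart_mono {E : Type*} [NormedAddCommGroup E] {K L : Set E} {δ ε : ℝ} (hKL : K ⊆ L)
    (hδε : δ ≤ ε) (z : E) : farPart K z δ ⊆ farPart L z ε :=
  fun _ hy => ⟨hKL hy.1, by linarith [hy.2]⟩

/-- For the centres `z ∈ Z`, every slice of `K` contains points that are almost at distance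
`1 + ‖z‖` from `z`; this is stated through hulls instead of slices. For `K` the unit ball and `Z`
the whole space it is the geometric form of the Daugavet property. -/
def IsDaugavetSet (K Z : Set X) : Prop :=
  ∀ z ∈ Z, ∀ ε > 0, K ⊆ closedConvexHull ℝ (farPart K z ε)

/-- The unit ball of the subspace `N` is a Daugavet set for all centres in the ambient space, that
is, `(N, X)` is a Daugavet pair. -/
def IsDaugavetSubspace (N : Submodule ℝ X) : Prop :=
  IsDaugavetSet (N ∩ Metric.closedBall 0 1 : Set X) univ

theorem IsDaugavetSet.exists_mem_farPart {K Z : Set X} (hK : IsDaugavetSet K Z) {x z : X}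
    (hx : x ∈ K) (hz : z ∈ Z) (f : X →L[ℝ] ℝ) {ε : ℝ} (hε : 0 < ε) :
    ∃ y ∈ farPart K z ε, f x - ε < f y :=
  mem_closedConvexHull_iff_forall_lt.1 (hK z hz ε hε hx) f ε hε

theorem isDaugavetSet_of_exists_mem_farPart {K Z : Set X}
    (h : ∀ x ∈ K, ∀ z ∈ Z, ∀ f : X →L[ℝ] ℝ, ∀ ε > 0, ∃ y ∈ farPart K z ε, f x - ε < f y) :
    IsDaugavetSet K Z := by
  intro z hz ε hε x hx
  refine mem_closedConvexHull_iff_forall_lt.2 fun f δ hδ => ?_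
  obtain ⟨y, hy, hfy⟩ := h x hx z hz f (min ε δ) (lt_min hε hδ)
  exact ⟨y, farPart_mono subset_rfl (min_le_left _ _) z hy, by linarith [min_le_right ε δ]⟩

theorem IsDaugavetSet.exists_pair {K : Set X} (hK : IsDaugavetSet K univ) {x : X} (hx : x ∈ K)
    (z : X) (f g : X →L[ℝ] ℝ) {ε : ℝ} (hε : 0 < ε) :
    ∃ y ∈ K, ∃ y' ∈ K, f x - ε < f y ∧ g x - ε < g y' ∧ 2 + ‖z‖ - 2 * ε ≤ ‖y + y' - z‖ := by
  obtain ⟨y, ⟨hyK, hyz⟩, hfy⟩ := hK.exists_mem_farPart hx (mem_univ z) f hε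
  obtain ⟨y', ⟨hyK', hyz'⟩, hgy'⟩ := hK.exists_mem_farPart hx (mem_univ (z - y)) g hε
  refine ⟨y, hyK, y', hyK', hfy, hgy', ?_⟩
  rw [norm_sub_rev] at hyz
  rw [show y + y' - z = y' - (z - y) by abel]
  linarith

theorem DaugavetProperty.nontrivial (h : DaugavetProperty X) : Nontrivial X := by
  by_contra hX
  rw [not_nontrivial_iff_subsingleton] at hX
  have hid := h 0 0
  rw [Subsingleton.elim (ContinuousLinearMap.id ℝ X + _) 0, norm_zero] at hid
  linarith [norm_nonneg ((0 : X →L[ℝ] ℝ).smulRight (0 : X))]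

theorem DaugavetProperty.exists_lt_apply_lt_norm_sub (h : DaugavetProperty X) {f : X →L[ℝ] ℝ}
    (hf : ‖f‖ = 1) {w : X} (hw : ‖w‖ = 1) {ε : ℝ} (hε : 0 < ε) :
    ∃ y, ‖y‖ ≤ 1 ∧ 1 - ε < f y ∧ 2 - ε < ‖y - w‖ := by
  obtain ⟨y, hy, hfy, hnorm⟩ : ∃ y, ‖y‖ ≤ 1 ∧ 0 ≤ f y ∧ 2 - ε / 2 < ‖y - f y • w‖ := by
    have hT : ‖ContinuousLinearMap.id ℝ X + f.smulRight (-w)‖ = 2 := by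
      rw [h f (-w), ContinuousLinearMap.norm_smulRight_apply, hf, norm_neg, hw]
      norm_num
    obtain ⟨y, hy, hTy⟩ := ContinuousLinearMap.exists_lt_apply_of_lt_opNorm _
      (show 2 - ε / 2 < ‖ContinuousLinearMap.id ℝ X + f.smulRight (-w)‖ by linarith)
    replace hTy : 2 - ε / 2 < ‖y - f y • w‖ := by simpa [sub_eq_add_neg] using hTy
    rcases le_total 0 (f y) with hpos | hneg
    · exact ⟨y, hy.le, hpos, hTy⟩
    · refine ⟨-y, (norm_neg y).trans_le hy.le, by simpa using hneg, ?_⟩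
      rwa [map_neg, neg_smul, sub_neg_eq_add, neg_add_eq_sub, norm_sub_rev]
  have hfy_le : f y ≤ 1 := hf ▸ apply_le_norm_of_norm_le_one f hy
  have hupper : ‖y - f y • w‖ ≤ ‖y‖ + f y := by
    simpa [norm_smul, hw, abs_of_nonneg hfy] using norm_sub_le y (f y • w)
  have hshift : ‖y - f y • w‖ ≤ ‖y - w‖ + (1 - f y) := by
    calc ‖y - f y • w‖ = ‖(y - w) + (1 - f y) • w‖ := by rw [sub_smul, one_smul]; abel_nf
      _ ≤ ‖y - w‖ + ‖(1 - f y) • w‖ := norm_add_le _ _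
      _ = ‖y - w‖ + (1 - f y) := by
        rw [norm_smul, hw, mul_one, Real.norm_of_nonneg (sub_nonneg.2 hfy_le)]
  exact ⟨y, hy, by linarith, by linarith⟩

theorem one_add_sub_mul_lt_norm_sub_smul {y w : X} (hy : ‖y‖ ≤ 1) (hw : ‖w‖ = 1) {r ε : ℝ}
    (hr : 0 ≤ r) (hε : 0 < ε) (hyw : 2 - ε < ‖y - w‖) :
    1 + r - (1 + r) * ε < ‖y - r • w‖ := by
  rcases le_total r 1 with hr1 | hr1
  · have htri : ‖y - w‖ ≤ ‖y - r • w‖ + (1 - r) := by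
      calc ‖y - w‖ = ‖(y - r • w) - (1 - r) • w‖ := by rw [sub_smul, one_smul]; abel_nf
        _ ≤ ‖y - r • w‖ + ‖(1 - r) • w‖ := norm_sub_le _ _
        _ = ‖y - r • w‖ + (1 - r) := by
          rw [norm_smul, hw, mul_one, Real.norm_of_nonneg (sub_nonneg.2 hr1)]
    nlinarith
  · have htri : r * ‖y - w‖ ≤ ‖y - r • w‖ + (r - 1) * ‖y‖ := by
      calc r * ‖y - w‖ = ‖r • (y - w)‖ := by rw [norm_smul, Real.norm_of_nonneg hr]
        _ = ‖(y - r • w) + (r - 1) • y‖ := by rw [smul_sub, sub_smul, one_smul]; abel_nf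
        _ ≤ ‖y - r • w‖ + ‖(r - 1) • y‖ := norm_add_le _ _
        _ = ‖y - r • w‖ + (r - 1) * ‖y‖ := by
          rw [norm_smul, Real.norm_of_nonneg (sub_nonneg.2 hr1)]
    nlinarith

theorem DaugavetProperty.isDaugavetSubspace_top (h : DaugavetProperty X) :
    IsDaugavetSubspace (⊤ : Submodule ℝ X) := by
  have := h.nontrivial
  refine isDaugavetSet_of_exists_mem_farPart fun x hx z _ f ε hε => ?_
  obtain ⟨w, hw, hwz⟩ := exists_norm_eq_one_norm_smul_eq z
  obtain ⟨g, hg, hgf⟩ := exists_norm_eq_one_norm_smul_eq f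
  obtain ⟨δ, hδ, hδε⟩ := exists_pos_mul_lt hε (1 + ‖z‖ + ‖f‖)
  obtain ⟨y, hy, hgy, hyw⟩ := h.exists_lt_apply_lt_norm_sub hg hw hδ
  have hyz := one_add_sub_mul_lt_norm_sub_smul hy hw (norm_nonneg z) hδ hyw
  rw [hwz] at hyz
  have hf := norm_nonneg f
  have hfx := apply_le_norm_of_norm_le_one f (mem_closedBall_zero_iff.1 hx.2)
  have hfy : f y = ‖f‖ * g y := congr($hgf.symm y)
  refine ⟨y, ⟨⟨trivial, mem_closedBall_zero_iff.2 hy⟩, ?_⟩, ?_⟩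
  · nlinarith
  · nlinarith [norm_nonneg z]

/-! ### Hyperplanes of Daugavet subspaces -/

theorem exists_mem_inf_ker_norm_sub_le {N : Submodule ℝ X} {φ : X →L[ℝ] ℝ} {e y : X}
    (he : e ∈ N) (hφe : φ e = 1) (hy : y ∈ N) (hy1 : ‖y‖ ≤ 1) :
    ∃ y' ∈ N ⊓ φ.ker, ‖y'‖ ≤ 1 ∧ ‖y' - y‖ ≤ 2 * ‖e‖ * |φ y| := by
  set κ := ‖e‖ * |φ y|
  have hκ0 : 0 ≤ κ := by positivity
  have hnorm : ‖φ y • e‖ = κ := by rw [norm_smul, Real.norm_eq_abs, mul_comm]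
  have hpos : 0 < 1 + κ := by linarith
  set y' := (1 + κ)⁻¹ • (y - φ y • e) with hy'
  have hscale : (1 + κ) • y' = y - φ y • e := smul_inv_smul₀ hpos.ne' _
  have hy'1 : ‖y'‖ ≤ 1 := by
    rw [hy', norm_smul, norm_inv, Real.norm_of_nonneg hpos.le, inv_mul_le_one₀ hpos]
    linarith [norm_sub_le y (φ y • e)]
  refine ⟨y', ⟨?_, ?_⟩, hy'1, ?_⟩
  · exact N.smul_mem _ (N.sub_mem hy (N.smul_mem _ he))
  · simp [hy', hφe]
  · calc ‖y' - y‖ = ‖κ • y' + φ y • e‖ := by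
          rw [← norm_neg, show -(y' - y) = y - φ y • e - y' + φ y • e by abel, ← hscale]
          congr 1
          module
      _ ≤ κ * ‖y'‖ + κ := by
          simpa [norm_smul, abs_of_nonneg hκ0, hnorm] using norm_add_le (κ • y') (φ y • e)
      _ ≤ 2 * ‖e‖ * |φ y| := by nlinarith

-- Tilting `F` by `±t • φ` produces two far points on which `φ` is `≥ -ε` and `≤ ε` respectively;
-- some point of the segment joining them is almost in the kernel.
theorem IsDaugavetSubspace.exists_abs_apply_le {N : Submodule ℝ X} (hN : IsDaugavetSubspace N)
    {φ F : X →L[ℝ] ℝ} (hF : ∀ r < ‖F‖, ∃ x ∈ N ⊓ φ.ker, ‖x‖ ≤ 1 ∧ r < F x) (z : X) {ε : ℝ}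
    (hε : 0 < ε) :
    ∃ y ∈ N, ‖y‖ ≤ 1 ∧ |φ y| ≤ ε ∧ ‖F‖ - ε ≤ F y ∧ 1 + ‖z‖ - ε ≤ ‖y - z‖ := by
  obtain ⟨t, ht, htφ⟩ := exists_pos_mul_lt (half_pos hε) ‖φ‖
  obtain ⟨δ, hδ, hδlt⟩ := exists_between (show 0 < min (ε / 4) (t * ε / 2) by positivity)
  obtain ⟨hδε, hδt⟩ := lt_min_iff.1 hδlt
  obtain ⟨x, hx, hx1, hFx⟩ := hF (‖F‖ - δ) (by linarith)
  have hφx : φ x = 0 := hx.2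
  obtain ⟨y, ⟨hyN, hy⟩, y', ⟨hyN', hy'⟩, hfar, hfar', hsum⟩ := hN.exists_pair
    ⟨hx.1, mem_closedBall_zero_iff.2 hx1⟩ z (F + t • φ) (F - t • φ) hδ
  rw [mem_closedBall_zero_iff] at hy hy'
  simp only [add_apply, sub_apply, smul_apply, smul_eq_mul, hφx, mul_zero, add_zero,
    sub_zero] at hfar hfar'
  have hFy := apply_le_norm_of_norm_le_one F hy
  have hFy' := apply_le_norm_of_norm_le_one F hy'
  obtain ⟨p, hp, hφp⟩ := exists_mem_segment_abs_apply_le φ (x := y) (y := y') hε.le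
    (by nlinarith) (by nlinarith)
  have hFp : ‖F‖ - ε ≤ F p := by
    have hφy := apply_le_norm_of_norm_le_one φ hy
    have hφy' := (abs_le.1 (φ.unit_le_opNorm y' hy')).1
    exact (convex_halfSpace_ge F.toLinearMap.isLinear _).segment_subset
      (show ‖F‖ - ε ≤ F y by nlinarith) (show ‖F‖ - ε ≤ F y' by nlinarith) hp
  refine ⟨p, N.convex.segment_subset hyN hyN' hp, ?_, hφp, hFp, ?_⟩
  · simpa using (convex_closedBall (0 : X) 1).segment_subset (by simpa) (by simpa) hp
  · exact one_add_norm_sub_le_of_mem_segment hy hy' (by linarith) hp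

theorem IsDaugavetSubspace.inf_ker {N : Submodule ℝ X} (hN : IsDaugavetSubspace N)
    (φ : X →L[ℝ] ℝ) : IsDaugavetSubspace (N ⊓ φ.ker) := by
  rcases em (N ≤ φ.ker) with hφ | hφ
  · rwa [inf_eq_left.2 hφ]
  obtain ⟨e, he, hφe⟩ : ∃ e ∈ N, φ e = 1 := by
    obtain ⟨v, hv, hφv⟩ := SetLike.not_le_iff_exists.1 hφ
    exact ⟨(φ v)⁻¹ • v, N.smul_mem _ hv, by simpa using inv_mul_cancel₀ hφv⟩
  refine isDaugavetSet_of_exists_mem_farPart fun x hx z _ f ε hε => ?_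
  obtain ⟨F, hFf, hF⟩ := exists_extension_norm_le_lt_apply (N ⊓ φ.ker) f
  obtain ⟨δ, hδ, hδε⟩ := exists_pos_mul_lt hε (1 + 2 * ‖e‖ + ‖F‖ * (2 * ‖e‖))
  obtain ⟨y₀, hy₀N, hy₀, hφy₀, hFy₀, hy₀z⟩ := hN.exists_abs_apply_le hF z hδ
  obtain ⟨y, hyN, hy, hyy₀⟩ := exists_mem_inf_ker_norm_sub_le he hφe hy₀N hy₀
  have hclose : ‖y - y₀‖ ≤ 2 * ‖e‖ * δ := hyy₀.trans (by gcongr)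
  have hFdiff : F y₀ - F y ≤ ‖F‖ * (2 * ‖e‖ * δ) := by
    rw [← map_sub]
    refine (le_abs_self _).trans ((F.le_opNorm _).trans ?_)
    rw [norm_sub_rev]
    gcongr
  have hFx : F x ≤ ‖F‖ := apply_le_norm_of_norm_le_one F (mem_closedBall_zero_iff.1 hx.2)
  have hcross : 0 ≤ ‖F‖ * (2 * ‖e‖) * δ := by positivity
  have hcross' : 0 ≤ 2 * ‖e‖ * δ := by positivity
  refine ⟨y, ⟨⟨hyN, mem_closedBall_zero_iff.2 hy⟩, ?_⟩, ?_⟩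
  · have htri := norm_sub_le_norm_sub_add_norm_sub y₀ y z
    rw [norm_sub_rev y₀ y] at htri
    linarith
  · rw [← hFf x hx.1, ← hFf y hyN]
    linarith

theorem not_isDaugavetSubspace_bot : ¬IsDaugavetSubspace (⊥ : Submodule ℝ X) := by
  intro h
  obtain ⟨y, ⟨⟨hy, -⟩, hfar⟩, -⟩ := h.exists_mem_farPart (x := 0) (by simp) (mem_univ 0) 0
    (show (0 : ℝ) < 1 / 2 by norm_num)
  rw [SetLike.mem_coe, Submodule.mem_bot] at hy
  norm_num [hy] at hfar

theorem IsDaugavetSubspace.not_finiteDimensional {N : Submodule ℝ X}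
    (hN : IsDaugavetSubspace N) : ¬FiniteDimensional ℝ N := by
  intro hfin
  induction hn : Module.finrank ℝ N using Nat.strong_induction_on generalizing N with
  | _ n ih =>
    obtain ⟨v, hv, hv0⟩ := Submodule.exists_mem_ne_zero_of_ne_bot
      (by rintro rfl; exact not_isDaugavetSubspace_bot hN : N ≠ ⊥)
    obtain ⟨φ, -, hφ⟩ := exists_dual_vector ℝ v (norm_ne_zero_iff.2 hv0)
    have hlt : N ⊓ φ.ker < N := inf_lt_left.2 fun hle => hv0 <| norm_eq_zero.1 <| by
      simpa [hφ] using hle hv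
    exact ih _ (hn ▸ Submodule.finrank_lt_finrank_of_lt hlt) (hN.inf_ker φ)
      (Submodule.finiteDimensional_of_le hlt.le) rfl

theorem exists_apply_eq_one_of_finite {N : Submodule ℝ X} (hN : ¬FiniteDimensional ℝ N) {S : Set X}
    (hS : S.Finite) {ρ : ℝ} (hρ : 0 < ρ) :
    ∃ v ∈ N, ∃ φ : X →L[ℝ] ℝ, ‖v‖ ≤ ρ ∧ φ v = 1 ∧ ∀ x ∈ S, φ x = 0 := by
  set W := Submodule.span ℝ S
  have : FiniteDimensional ℝ W := FiniteDimensional.span_of_finite ℝ hS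
  have : IsClosed (W : Set X) := W.closed_of_finiteDimensional
  obtain ⟨v, hvN, hvW⟩ := SetLike.not_le_iff_exists.1 fun hle : N ≤ W =>
    hN (Submodule.finiteDimensional_of_le hle)
  obtain ⟨g, hg⟩ := SeparatingDual.exists_eq_one (R := ℝ)
    (mt (Submodule.Quotient.mk_eq_zero W).1 hvW)
  obtain ⟨c, hc, hcρ⟩ := exists_pos_mul_lt hρ ‖v‖
  refine ⟨c • v, N.smul_mem _ hvN, c⁻¹ • g.comp W.mkQL, ?_, ?_, fun x hx => ?_⟩
  · rw [norm_smul, Real.norm_of_nonneg hc.le, mul_comm]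
    exact hcρ.le
  · simp [hg, hc.ne']
  · simp [(Submodule.Quotient.mk_eq_zero W).2 (Submodule.subset_span hx)]

/-! ### Countable Daugavet sets with small directions biorthogonal to them -/

theorem IsDaugavetSet.exists_finite_of_mem {K Z : Set X} (hK : IsDaugavetSet K Z) {x z : X}
    (hx : x ∈ K) (hz : z ∈ Z) {ε : ℝ} (hε : 0 < ε) :
    ∃ T ⊆ K, T.Finite ∧ x ∈ Metric.thickening ε (convexHull ℝ (farPart T z ε)) := by
  have hclosure := hK z hz ε hε hx
  rw [closedConvexHull_eq_closure_convexHull] at hclosure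
  obtain ⟨p, hp, hxp⟩ := Metric.mem_closure_iff.1 hclosure ε hε
  rw [convexHull_eq_union_convexHull_finite_subsets] at hp
  obtain ⟨T, hT, hpT⟩ := mem_iUnion₂.1 hp
  have hTfar : (T : Set X) ⊆ farPart T z ε := fun y hy => ⟨hy, (hT hy).2⟩
  exact ⟨T, hT.trans (sep_subset _ _), T.finite_toSet,
    Metric.mem_thickening_iff.2 ⟨p, convexHull_mono hTfar hpT, hxp⟩⟩

theorem IsDaugavetSet.exists_finite_of_isCompact {K Z A C : Set X} (hK : IsDaugavetSet K Z)
    (hAK : A ⊆ K) (hA : A.Finite) (hCZ : C ⊆ Z) (hC : IsCompact C) {ε : ℝ} (hε : 0 < ε) :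
    ∃ T ⊆ K, T.Finite ∧
      ∀ x ∈ A, ∀ z ∈ C, x ∈ Metric.thickening ε (convexHull ℝ (farPart T z ε)) := by
  obtain ⟨D, hDC, hD, hCD⟩ := hC.finite_cover_balls (show 0 < ε / 4 by positivity)
  choose! T hTK hTfin hT using fun x (hx : x ∈ A) z (hz : z ∈ D) =>
    hK.exists_finite_of_mem (hAK hx) (hCZ (hDC hz)) (half_pos hε)
  refine ⟨⋃ x ∈ A, ⋃ z ∈ D, T x z, iUnion₂_subset fun x hx => iUnion₂_subset (hTK x hx),
    hA.biUnion fun x hx => hD.biUnion (hTfin x hx), fun x hx z hz => ?_⟩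
  obtain ⟨d, hd, hzd⟩ := mem_iUnion₂.1 (hCD hz)
  have hfar : farPart (T x d) d (ε / 2) ⊆ farPart (⋃ x ∈ A, ⋃ z ∈ D, T x z) z ε := by
    rintro y ⟨hyT, hyd⟩
    refine ⟨mem_biUnion hx (mem_biUnion hd hyT), ?_⟩
    rw [Metric.mem_ball, dist_eq_norm] at hzd
    linarith [norm_sub_le_norm_sub_add_norm_sub y z d, norm_sub_norm_le z d]
  exact Metric.thickening_subset_of_subset _ (convexHull_mono hfar)
    (Metric.thickening_mono (half_le_self hε.le) _ (hT x hx d hd))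

theorem isDaugavetSet_iUnion {A : ℕ → Set X} (hA : Monotone A)
    (happrox : ∀ n : ℕ, ∀ x ∈ A n, ∀ z ∈ Submodule.span ℝ (A n), ‖z‖ ≤ n →
      x ∈ Metric.thickening (1 / ((n : ℝ) + 1))
        (convexHull ℝ (farPart (A (n + 1)) z (1 / ((n : ℝ) + 1))))) :
    IsDaugavetSet (⋃ n, A n) (Submodule.span ℝ (⋃ n, A n)) := by
  intro z hz ε hε x hx
  obtain ⟨i, hxi⟩ := mem_iUnion.1 hx
  obtain ⟨j, hzj⟩ : ∃ j, z ∈ Submodule.span ℝ (A j) := by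
    rwa [SetLike.mem_coe, Submodule.span_iUnion, Submodule.mem_iSup_of_directed] at hz
    exact (show Monotone fun n => Submodule.span ℝ (A n) from fun _ _ hmn =>
      Submodule.span_mono (hA hmn)).directed_le
  rw [closedConvexHull_eq_closure_convexHull, Metric.mem_closure_iff]
  intro δ hδ
  have hlarge : ∀ᶠ n : ℕ in Filter.atTop,
      i ≤ n ∧ j ≤ n ∧ ‖z‖ ≤ n ∧ 1 / ((n : ℝ) + 1) < min ε δ :=
    (Filter.eventually_ge_atTop i).and <| (Filter.eventually_ge_atTop j).and <|
      (tendsto_natCast_atTop_atTop.eventually_ge_atTop ‖z‖).and <|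
        tendsto_one_div_add_atTop_nhds_zero_nat.eventually_lt_const (lt_min hε hδ)
  obtain ⟨n, hin, hjn, hzn, hn⟩ := hlarge.exists
  obtain ⟨hnε, hnδ⟩ := lt_min_iff.1 hn
  obtain ⟨p, hp, hxp⟩ := Metric.mem_thickening_iff.1 <|
    happrox n x (hA hin hxi) z (Submodule.span_mono (hA hjn) hzj) hzn
  exact ⟨p, convexHull_mono (farPart_mono (subset_iUnion A _) hnε.le z) hp, hxp.trans hnδ⟩

/-- A stage of the inductive construction: the finitely many points and directions chosen so far,
and the Daugavet subspace that contains the points and will contain everything chosen later. -/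
structure DaugavetStage (X : Type*) [NormedAddCommGroup X] [NormedSpace ℝ X] where
  subspace : Submodule ℝ X
  points : Set X
  directions : Set X
  isDaugavetSubspace : IsDaugavetSubspace subspace
  finite_points : points.Finite
  finite_directions : directions.Finite
  points_subset : points ⊆ (subspace ∩ Metric.closedBall 0 1 : Set X)
  neg_points : -points = points

/-- The transition from the stage `s` to the stage `s'` that adds the direction `u` with its
functional `φ`, and enough points to make those of `s` Daugavet up to the error `1 / (n + 1)`. -/
structure DaugavetStage.Step (ρ : ℝ) (n : ℕ) (s s' : DaugavetStage X) (u : X)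
    (φ : X →L[ℝ] ℝ) : Prop where
  points_subset : s.points ⊆ s'.points
  insert_subset : insert u s.directions ⊆ s'.directions
  subspace_le : s'.subspace ≤ s.subspace ⊓ φ.ker
  mem_subspace : u ∈ s.subspace
  norm_le : ‖u‖ ≤ ρ
  apply_self : φ u = 1
  apply_directions : ∀ v ∈ s.directions, φ v = 0
  approx : ∀ x ∈ s.points, ∀ z ∈ Submodule.span ℝ s.points, ‖z‖ ≤ n →
    x ∈ Metric.thickening (1 / ((n : ℝ) + 1))
      (convexHull ℝ (farPart s'.points z (1 / ((n : ℝ) + 1))))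

theorem DaugavetStage.exists_step {ρ : ℝ} (hρ : 0 < ρ) (n : ℕ) (s : DaugavetStage X) :
    ∃ s' u φ, Step ρ n s s' u φ := by
  obtain ⟨u, hu, φ, huρ, hφu, hφ⟩ := exists_apply_eq_one_of_finite
    s.isDaugavetSubspace.not_finiteDimensional (s.finite_points.union s.finite_directions) hρ
  set N := s.subspace ⊓ φ.ker
  have hN : IsDaugavetSubspace N := s.isDaugavetSubspace.inf_ker φ
  have hpoints : s.points ⊆ (N ∩ Metric.closedBall 0 1 : Set X) := fun x hx =>
    ⟨⟨(s.points_subset hx).1, hφ x (.inl hx)⟩, (s.points_subset hx).2⟩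
  obtain ⟨C, hC, hmemC⟩ : ∃ C : Set X, IsCompact C ∧
      ∀ z ∈ Submodule.span ℝ s.points, ‖z‖ ≤ n → z ∈ C := by
    have := FiniteDimensional.span_of_finite ℝ s.finite_points
    exact ⟨_, (isCompact_closedBall (0 : Submodule.span ℝ s.points) n).image continuous_subtype_val,
      fun z hz hzn => ⟨⟨z, hz⟩, by simpa using hzn, rfl⟩⟩
  obtain ⟨T, hTN, hTfin, hT⟩ := hN.exists_finite_of_isCompact hpoints s.finite_points
    (subset_univ C) hC (Nat.one_div_pos_of_nat (n := n))
  have hneg : -T ⊆ (N ∩ Metric.closedBall 0 1 : Set X) := fun x hx =>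
    ⟨neg_mem_iff.1 (hTN hx).1, by simpa using (hTN hx).2⟩
  refine ⟨⟨N, s.points ∪ (T ∪ -T), insert u s.directions, hN,
    s.finite_points.union (hTfin.union hTfin.neg), s.finite_directions.insert u,
    union_subset hpoints (union_subset hTN hneg), ?_⟩, u, φ,
    ⟨subset_union_left, subset_rfl, le_rfl, hu, huρ, hφu, fun v hv => hφ v (.inr hv), ?_⟩⟩
  · rw [union_neg, union_neg, s.neg_points, neg_neg, union_comm T]
  · intro x hx z hz hzn
    have hTsub : T ⊆ s.points ∪ (T ∪ -T) := fun y hy => .inr (.inl hy)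
    exact Metric.thickening_subset_of_subset _
      (convexHull_mono (farPart_mono hTsub le_rfl z)) (hT x hx z (hmemC z hz hzn))

/-- A symmetric sequence `x` in the unit ball that is Daugavet relative to its own span, together
with directions `u` of norm at most `ρ` and functionals `φ` biorthogonal to `u` and annihilating
`x`. -/
structure IsDaugavetSystem (ρ : ℝ) (x u : ℕ → X) (φ : ℕ → X →L[ℝ] ℝ) : Prop where
  norm_point_le : ∀ k, ‖x k‖ ≤ 1
  neg_range : -range x = range x
  isDaugavetSet : IsDaugavetSet (range x) (Submodule.span ℝ (range x))
  norm_direction_le : ∀ n, ‖u n‖ ≤ ρ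
  apply_point : ∀ n k, φ n (x k) = 0
  apply_self : ∀ n, φ n (u n) = 1
  apply_of_ne : ∀ n m, n ≠ m → φ n (u m) = 0

theorem DaugavetStage.exists_isDaugavetSystem_of_step {ρ : ℝ} {s : ℕ → DaugavetStage X}
    {u : ℕ → X} {φ : ℕ → X →L[ℝ] ℝ} (hs : ∀ n, Step ρ n (s n) (s (n + 1)) (u n) (φ n))
    (h0 : (s 0).points.Nonempty) : ∃ x, IsDaugavetSystem ρ x u φ := by
  have hpoints : Monotone fun n => (s n).points :=
    monotone_nat_of_le_succ fun n => (hs n).points_subset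
  have hdirections : Monotone fun n => (s n).directions :=
    monotone_nat_of_le_succ fun n => (subset_insert _ _).trans (hs n).insert_subset
  have hsubspace : Antitone fun n => (s n).subspace :=
    antitone_nat_of_succ_le fun n => (hs n).subspace_le.trans inf_le_left
  have hker {m n : ℕ} (hmn : m < n) {v : X} (hv : v ∈ (s n).subspace) : φ m v = 0 :=
    ((hs m).subspace_le (hsubspace (Nat.succ_le_of_lt hmn) hv)).2
  obtain ⟨x, hx⟩ := (countable_iUnion fun n => (s n).finite_points.countable).exists_eq_range
    (h0.mono (subset_iUnion (fun n => (s n).points) 0))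
  have hstage (k : ℕ) : ∃ n, x k ∈ (s n).points := mem_iUnion.1 (hx.ge (mem_range_self k))
  refine ⟨x, ⟨fun k => ?_, ?_, ?_, fun n => (hs n).norm_le, fun n k => ?_,
    fun n => (hs n).apply_self, fun n m hnm => ?_⟩⟩
  · obtain ⟨n, hn⟩ := hstage k
    exact mem_closedBall_zero_iff.1 ((s n).points_subset hn).2
  · simp only [← hx, iUnion_neg, (s _).neg_points]
  · exact hx ▸ isDaugavetSet_iUnion hpoints fun n => (hs n).approx
  · obtain ⟨m, hm⟩ := hstage k
    exact hker (lt_max_of_lt_right n.lt_succ_self)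
      ((s _).points_subset (hpoints (le_max_left m (n + 1)) hm)).1
  · rcases hnm.lt_or_gt with hlt | hgt
    · exact hker hlt (hs m).mem_subspace
    · exact (hs n).apply_directions _ <|
        hdirections (Nat.succ_le_of_lt hgt) ((hs m).insert_subset (mem_insert _ _))

theorem IsDaugavetSubspace.exists_isDaugavetSystem {N : Submodule ℝ X} (hN : IsDaugavetSubspace N)
    {ρ : ℝ} (hρ : 0 < ρ) : ∃ x u φ, IsDaugavetSystem (X := X) ρ x u φ := by
  choose next u φ hstep using DaugavetStage.exists_step (X := X) hρ
  let s₀ : DaugavetStage X :=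
    ⟨N, {0}, ∅, hN, finite_singleton 0, finite_empty, by simp, by simp⟩
  let s : ℕ → DaugavetStage X := fun n => Nat.rec s₀ next n
  obtain ⟨x, hx⟩ := DaugavetStage.exists_isDaugavetSystem_of_step
    (fun n => hstep n (s n)) (singleton_nonempty (0 : X))
  exact ⟨x, _, _, hx⟩

/-! ### Symmetric SCD hulls of biorthogonal families -/

theorem isSCD_closedConvexHull_of_exists_isSlice_subset_ball {P : Set X} (hP : P.Countable)
    (hne : P.Nonempty)
    (h : ∀ p ∈ P, ∀ ε > 0, ∃ S, IsSlice (closedConvexHull ℝ P) S ∧ S ⊆ Metric.ball p ε) :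
    IsSCD (closedConvexHull ℝ P) := by
  obtain ⟨p, rfl⟩ := hP.exists_eq_range hne
  choose S hS hSp using fun i (m : ℕ) =>
    h (p i) (mem_range_self i) (1 / ((m : ℝ) + 1)) Nat.one_div_pos_of_nat
  refine ⟨fun n => S n.unpair.1 n.unpair.2, fun n => hS _ _, fun B hB => ?_⟩
  refine closedConvexHull_min ?_ (convex_convexHull ℝ B).closure isClosed_closure
  rintro _ ⟨i, rfl⟩
  refine closure_mono (subset_convexHull ℝ B) (Metric.mem_closure_iff.2 fun ε hε => ?_)
  obtain ⟨m, hm⟩ := exists_nat_one_div_lt hε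
  obtain ⟨q, hqB, hqS⟩ : (B ∩ S i m).Nonempty := by simpa using hB (Nat.pair i m)
  exact ⟨q, hqB, (Metric.mem_ball'.1 (hSp i m hqS)).trans hm⟩

theorem exists_isSlice_subset_ball {P : Set X} {R : ℝ} (hP : ∀ q ∈ P, ‖q‖ ≤ R) {p : X}
    (hp : p ∈ P) {g : X →L[ℝ] ℝ} (hgp : g p = 1) (hg : ∀ q ∈ P, q ≠ p → g q ≤ 0) {ε : ℝ}
    (hε : 0 < ε) : ∃ S, IsSlice (closedConvexHull ℝ P) S ∧ S ⊆ Metric.ball p ε := by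
  have hR : 0 < R := (norm_pos_iff.2 (by rintro rfl; simp at hgp)).trans_le (hP p hp)
  have hdist : ∀ c ∈ closedConvexHull ℝ P, dist c p + 2 * R * g c ≤ 2 * R := by
    intro c hc
    have hconv : ConvexOn ℝ univ fun c => dist c p + 2 * R * g c :=
      (convexOn_univ_dist p).add (((2 * R) • g).toLinearMap.convexOn convex_univ)
    refine closedConvexHull_min (t := {c | dist c p + 2 * R * g c ≤ 2 * R}) (fun q hq => ?_)
      (by simpa using hconv.convex_le (2 * R)) (isClosed_le (by fun_prop) continuous_const) hc
    rcases eq_or_ne q p with rfl | hqp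
    · simp [hgp]
    · have hdist_le : dist q p ≤ R + R :=
        (dist_le_norm_add_norm q p).trans (add_le_add (hP q hq) (hP p hp))
      rw [mem_ofPred_eq]
      nlinarith [hg q hq hqp]
  have hgreatest : IsGreatest (g '' closedConvexHull ℝ P) 1 := by
    refine ⟨⟨p, subset_closedConvexHull hp, hgp⟩, ?_⟩
    rintro _ ⟨c, hc, rfl⟩
    nlinarith [hdist c hc, dist_nonneg (x := c) (y := p)]
  have hδ : 0 < ε / (2 * R) := by positivity
  refine ⟨sliceSet (closedConvexHull ℝ P) g (ε / (2 * R)), ⟨⟨p, subset_closedConvexHull hp, ?_⟩,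
    g, by rintro rfl; simp at hgp, _, hδ, rfl⟩, ?_⟩
  · rw [hgreatest.csSup_eq, hgp]
    linarith
  · rintro c ⟨hc, hgc⟩
    rw [hgreatest.csSup_eq, sub_lt_comm, lt_div_iff₀ (by positivity)] at hgc
    exact Metric.mem_ball.2 (by linarith [hdist c hc])

theorem norm_le_of_mem_range_union_neg {ι E : Type*} [NormedAddCommGroup E] {p : ι → E} {R : ℝ}
    (hp : ∀ i, ‖p i‖ ≤ R) {q : E} (hq : q ∈ range p ∪ -range p) : ‖q‖ ≤ R := by
  rcases hq with ⟨i, rfl⟩ | ⟨i, hi⟩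
  · exact hp i
  · simpa [hi] using hp i

theorem isSCD_closedConvexHull_range_union_neg {ι : Type*} [Countable ι] [Nonempty ι] {p : ι → X}
    {g : ι → X →L[ℝ] ℝ} {R : ℝ} (hp : ∀ i, ‖p i‖ ≤ R) (hself : ∀ i, g i (p i) = 1)
    (hne : ∀ i j, i ≠ j → g i (p j) = 0) :
    IsSCD (closedConvexHull ℝ (range p ∪ -range p)) := by
  have hbound : ∀ q ∈ range p ∪ -range p, ‖q‖ ≤ R := fun q => norm_le_of_mem_range_union_neg hp
  have hdual : ∀ i, ∀ q ∈ range p ∪ -range p, q = p i ∨ q = -p i ∨ g i q = 0 := by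
    rintro i q (⟨j, rfl⟩ | ⟨j, hj⟩) <;> rcases eq_or_ne i j with rfl | hij
    · exact .inl rfl
    · exact .inr (.inr (hne i j hij))
    · exact .inr (.inl (by rw [hj, neg_neg]))
    · exact .inr (.inr (by simpa [hj] using hne i j hij))
  refine isSCD_closedConvexHull_of_exists_isSlice_subset_ball
    ((countable_range p).union ((countable_range p).preimage neg_injective))
    ((range_nonempty p).mono subset_union_left) fun q hq ε hε => ?_
  rcases hq with ⟨i, rfl⟩ | ⟨i, hi⟩
  · refine exists_isSlice_subset_ball hbound (.inl ⟨i, rfl⟩) (hself i) (fun q hq hqi => ?_) hε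
    rcases hdual i q hq with rfl | rfl | hq0
    · exact absurd rfl hqi
    · simp [hself]
    · exact hq0.le
  · obtain rfl : q = -p i := by rw [hi, neg_neg]
    refine exists_isSlice_subset_ball (g := -g i) hbound (.inr ⟨i, hi⟩) (by simp [hself])
      (fun q hq hqi => ?_) hε
    rcases hdual i q hq with rfl | rfl | hq0
    · simp [hself]
    · exact absurd rfl hqi
    · simp [hq0]

theorem closedConvexHull_neg (s : Set X) : closedConvexHull ℝ (-s) = -closedConvexHull ℝ s := by
  rw [closedConvexHull_eq_closure_convexHull, closedConvexHull_eq_closure_convexHull,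
    convexHull_neg, neg_closure]

/-- The point `x k + a i` with `a i` moved slightly towards `b n`, where `n` codes the pair `(k, i)`
and a free third component. The free component makes `x k + a i` a limit of spikes, while the
direction `b n`, occurring in one spike only, makes each spike strongly exposed. -/
noncomputable def spike (x a b : ℕ → X) (n : ℕ) : X :=
  x n.unpair.1.unpair.1 + AffineMap.lineMap (a n.unpair.1.unpair.2) (b n) (1 / ((n : ℝ) + 1))

/-- The closed symmetric convex hull of the spikes. -/
noncomputable def spikedHull (x a b : ℕ → X) : Set X :=
  closedConvexHull ℝ (range (spike x a b) ∪ -range (spike x a b))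

theorem neg_spikedHull (x a b : ℕ → X) : -spikedHull x a b = spikedHull x a b := by
  rw [spikedHull, ← closedConvexHull_neg, union_neg, neg_neg, union_comm]

theorem one_div_natCast_add_one_mem_Icc (n : ℕ) : 1 / ((n : ℝ) + 1) ∈ Icc (0 : ℝ) 1 :=
  ⟨Nat.one_div_pos_of_nat.le, (div_le_one (by positivity)).2 (by simp)⟩

section Spikes

variable {x a b : ℕ → X} {ρ : ℝ}

theorem norm_spike_le (hx : ∀ k, ‖x k‖ ≤ 1) (ha : ∀ i, ‖a i‖ ≤ ρ) (hb : ∀ i, ‖b i‖ ≤ ρ) (n : ℕ) :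
    ‖spike x a b n‖ ≤ 1 + ρ := by
  refine (norm_add_le _ _).trans (add_le_add (hx _) (mem_closedBall_zero_iff.1 ?_))
  exact (convex_closedBall (0 : X) ρ).lineMap_mem (mem_closedBall_zero_iff.2 (ha _))
    (mem_closedBall_zero_iff.2 (hb _)) (one_div_natCast_add_one_mem_Icc n)

theorem norm_le_of_mem_spikedHull (hx : ∀ k, ‖x k‖ ≤ 1) (ha : ∀ i, ‖a i‖ ≤ ρ)
    (hb : ∀ i, ‖b i‖ ≤ ρ) {c : X} (hc : c ∈ spikedHull x a b) : ‖c‖ ≤ 1 + ρ := by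
  refine mem_closedBall_zero_iff.1 (closedConvexHull_min (fun q hq => ?_) (convex_closedBall _ _)
    Metric.isClosed_closedBall hc)
  exact mem_closedBall_zero_iff.2 (norm_le_of_mem_range_union_neg (norm_spike_le hx ha hb) hq)

theorem isSCD_spikedHull {φ : ℕ → X →L[ℝ] ℝ} (hx : ∀ k, ‖x k‖ ≤ 1) (ha : ∀ i, ‖a i‖ ≤ ρ)
    (hb : ∀ i, ‖b i‖ ≤ ρ) (hφx : ∀ n k, φ n (x k) = 0) (hφa : ∀ n i, φ n (a i) = 0)
    (hself : ∀ n, φ n (b n) = 1) (hne : ∀ n m, n ≠ m → φ n (b m) = 0) :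
    IsSCD (spikedHull x a b) := by
  refine isSCD_closedConvexHull_range_union_neg (g := fun n => ((n : ℝ) + 1) • φ n)
    (norm_spike_le hx ha hb) (fun n => ?_) fun n m hnm => ?_
  · simp [spike, AffineMap.lineMap_apply_module, hφx, hφa, hself, Nat.cast_add_one_ne_zero]
  · simp [spike, AffineMap.lineMap_apply_module, hφx, hφa, hne n m hnm]

theorem add_mem_spikedHull (hb : ∀ i, ‖b i‖ ≤ ρ) (k i : ℕ) : x k + a i ∈ spikedHull x a b := by
  refine isClosed_closedConvexHull.closure_subset (Metric.mem_closure_iff.2 fun ε hε => ?_)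
  have hρ : 0 ≤ ρ := (norm_nonneg _).trans (hb 0)
  obtain ⟨m, hm⟩ := exists_nat_one_div_lt (show 0 < ε / (‖a i‖ + ρ + 1) by positivity)
  set n := Nat.pair (Nat.pair k i) m with hn
  refine ⟨spike x a b n, subset_closedConvexHull (.inl ⟨n, rfl⟩), ?_⟩
  have hnm : 1 / ((n : ℝ) + 1) ≤ 1 / ((m : ℝ) + 1) :=
    Nat.one_div_le_one_div (Nat.right_le_pair _ _)
  rw [lt_div_iff₀ (by positivity)] at hm
  calc dist (x k + a i) (spike x a b n) = 1 / ((n : ℝ) + 1) * dist (a i) (b n) := by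
        simp only [spike, hn, Nat.unpair_pair]
        rw [dist_add_left, dist_left_lineMap, Real.norm_of_nonneg Nat.one_div_pos_of_nat.le]
    _ ≤ 1 / ((m : ℝ) + 1) * (‖a i‖ + ρ + 1) := by
        gcongr
        linarith [dist_le_norm_add_norm (a i) (b n), hb n]
    _ < ε := hm

end Spikes

/-! ### Minkowski sums of spiked hulls -/

theorem exists_forall_apply_le_add {S : Set X} (hS : IsBounded S) (hne : S.Nonempty)
    (f : X →L[ℝ] ℝ) {ε : ℝ} (hε : 0 < ε) : ∃ v ∈ S, ∀ w ∈ S, f w ≤ f v + ε := by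
  have hbdd : BddAbove (f '' S) := (f.lipschitz.isBounded_image hS).bddAbove
  obtain ⟨_, ⟨v, hv, rfl⟩, hlt⟩ :=
    exists_lt_of_lt_csSup (hne.image f) (sub_lt_self (sSup (f '' S)) hε)
  exact ⟨v, hv, fun w hw => by linarith [le_csSup hbdd (mem_image_of_mem f hw)]⟩

theorem mem_sliceSet_of_forall_apply_le {S : Set X} {f : X →L[ℝ] ℝ} {M ε : ℝ} {y : X} (hy : y ∈ S)
    (hM : ∀ s ∈ S, f s ≤ M) (hfy : M - ε < f y) : y ∈ sliceSet S f ε := by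
  have hsup : sSup (f '' S) ≤ M := csSup_le ⟨_, mem_image_of_mem f hy⟩ (forall_mem_image.2 hM)
  exact ⟨hy, by linarith⟩

theorem exists_seq_sub_le_norm_sum {N : Submodule ℝ X} {P : ℕ → X → Prop}
    (hP : ∀ n, ∀ z ∈ N, ∀ ε > 0, ∃ y ∈ N, P n y ∧ 1 + ‖z‖ - ε < ‖y - z‖) {η : ℝ} (hη : 0 < η) :
    ∃ y : ℕ → X, (∀ n, P n (y n)) ∧ ∀ n : ℕ, n - η ≤ ‖∑ j ∈ Finset.range n, y j‖ := by
  choose! next hnextN hnextP hnext using fun n z (hz : z ∈ N) =>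
    hP n z hz (η / 2 ^ (n + 1)) (by positivity)
  let z : ℕ → X := fun n => Nat.rec 0 (fun n z => z - next n z) n
  have hz (n : ℕ) : z n ∈ N := by
    induction n with
    | zero => exact N.zero_mem
    | succ n ih => exact N.sub_mem ih (hnextN n _ ih)
  have hsum (n : ℕ) : ∑ j ∈ Finset.range n, next j (z j) = -z n := by
    induction n with
    | zero => simp [z]
    | succ n ih => rw [Finset.sum_range_succ, ih, neg_add_eq_sub, ← neg_sub]
  have hnorm (n : ℕ) : n - η * (1 - 1 / 2 ^ n) ≤ ‖z n‖ := by
    induction n with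
    | zero => simp
    | succ n ih =>
      have hstep := hnext n (z n) (hz n)
      rw [norm_sub_rev] at hstep
      change _ ≤ ‖z n - next n (z n)‖
      have hhalf : (1 : ℝ) / 2 ^ n = 2 * (1 / 2 ^ (n + 1)) := by rw [pow_succ]; field_simp
      rw [div_eq_mul_one_div η] at hstep
      push_cast
      nlinarith
  refine ⟨fun n => next n (z n), fun n => hnextP n _ (hz n), fun n => ?_⟩
  rw [hsum, norm_neg]
  have hpow : 0 < η * (1 / 2 ^ n) := by positivity
  linarith [hnorm n]

-- With `w` near `-2 y₀` and `p` in the hull of the `y n`, the vector `(p + 2 y₀) / 3` is again in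
-- this hull, so `p` has distance almost `3` from `-2 y₀`.
theorem notMem_closure_convexHull_range_add {y r : ℕ → X} {w : X} {η R R' : ℝ}
    (hy : ∀ n, ‖y n‖ ≤ 1) (hsum : ∀ n : ℕ, n - η ≤ ‖∑ j ∈ Finset.range n, y j‖)
    (hr : ∀ n, ‖r n‖ ≤ R) (hw : ‖w + (2 : ℝ) • y 0‖ ≤ R') (hR : R + R' < 3 * (1 - η)) :
    w ∉ closure (convexHull ℝ (range fun n => y n + r n)) := by
  have hsplit : convexHull ℝ (range fun n => y n + r n) ⊆
      convexHull ℝ (range y) + Metric.closedBall 0 R := by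
    refine convexHull_min ?_ ((convex_convexHull ℝ _).add (convex_closedBall _ _))
    rintro _ ⟨n, rfl⟩
    exact add_mem_add (subset_convexHull ℝ _ (mem_range_self n)) (mem_closedBall_zero_iff.2 (hr n))
  intro hmem
  obtain ⟨q, hq, hwq⟩ := Metric.mem_closure_iff.1 hmem (3 * (1 - η) - (R + R')) (sub_pos.2 hR)
  obtain ⟨p, hp, e, he, rfl⟩ := hsplit hq
  rw [mem_closedBall_zero_iff] at he
  rw [dist_eq_norm] at hwq
  have hmean : (1 / 3 : ℝ) • p + (2 / 3 : ℝ) • y 0 ∈ convexHull ℝ (range y) :=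
    convex_convexHull ℝ _ hp (subset_convexHull ℝ _ (mem_range_self 0)) (by norm_num)
      (by norm_num) (by norm_num)
  have hfar : 3 * (1 - η) ≤ ‖p + (2 : ℝ) • y 0‖ := by
    have h := one_sub_le_norm_of_mem_convexHull_range hy hsum hmean
    calc 3 * (1 - η) ≤ 3 * ‖(1 / 3 : ℝ) • p + (2 / 3 : ℝ) • y 0‖ := by gcongr
      _ = ‖(3 : ℝ) • ((1 / 3 : ℝ) • p + (2 / 3 : ℝ) • y 0)‖ := by
        rw [norm_smul, Real.norm_of_nonneg zero_le_three]
      _ = ‖p + (2 : ℝ) • y 0‖ := by congr 1; module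
  have hnear : ‖p + (2 : ℝ) • y 0‖ ≤ R' + ‖w - (p + e)‖ + R := by
    calc ‖p + (2 : ℝ) • y 0‖ = ‖(w + (2 : ℝ) • y 0) - (w - (p + e)) - e‖ := by congr 1; abel
      _ ≤ ‖w + (2 : ℝ) • y 0‖ + ‖w - (p + e)‖ + ‖e‖ :=
        (norm_sub_le _ _).trans (by gcongr; exact norm_sub_le _ _)
      _ ≤ R' + ‖w - (p + e)‖ + R := by gcongr
  linarith

theorem IsDaugavetSet.not_isSCD {A S : Set X} {R R' : ℝ}
    (hA : IsDaugavetSet A (Submodule.span ℝ A)) (hA1 : ∀ x ∈ A, ‖x‖ ≤ 1) (hneg : -A = A)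
    (hslice : ∀ U, IsSlice S U → ∃ f : X →L[ℝ] ℝ, ∃ x₀ ∈ A, ∃ δ > 0, ∃ r, ‖r‖ ≤ R ∧
      ∀ x ∈ A, f x₀ - δ < f x → x + r ∈ U)
    (hdouble : ∀ x ∈ A, ∃ w ∈ S, ‖w - (2 : ℝ) • x‖ ≤ R') (hR : R + R' < 3) : ¬IsSCD S := by
  rintro ⟨U, hU, hdet⟩
  choose f x₀ hx₀ δ hδ r hr hrU using fun n => hslice (U n) (hU n)
  obtain ⟨η, hη, hηR⟩ := exists_pos_mul_lt (sub_pos.2 hR) 3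
  obtain ⟨y, hy, hsum⟩ := exists_seq_sub_le_norm_sum (N := Submodule.span ℝ A)
    (P := fun n x => x ∈ A ∧ x + r n ∈ U n) (fun n z hz ε hε => by
      obtain ⟨x, ⟨hxA, hxz⟩, hfx⟩ :=
        hA.exists_mem_farPart (hx₀ n) hz (f n) (lt_min hε (hδ n))
      exact ⟨x, Submodule.subset_span hxA,
        ⟨hxA, hrU n x hxA (by linarith [min_le_right ε (δ n)])⟩,
        by linarith [min_le_left ε (δ n)]⟩) hη
  have hy0 : -y 0 ∈ A := hneg.le (neg_mem_neg.2 (hy 0).1)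
  obtain ⟨w, hwS, hw⟩ := hdouble _ hy0
  rw [smul_neg, sub_neg_eq_add] at hw
  refine notMem_closure_convexHull_range_add (fun n => hA1 _ (hy n).1) hsum hr hw (by linarith)
    (hdet (range fun n => y n + r n) (fun n => ?_) hwS)
  exact ⟨_, ⟨n, rfl⟩, (hy n).2⟩

section Sums

variable {x a b : ℕ → X} {ρ : ℝ}

theorem add_mem_spikedHull_of_mem_union_neg (hneg : -range x = range x) (hb : ∀ i, ‖b i‖ ≤ ρ)
    {y v : X} (hy : y ∈ range x) (hv : v ∈ range a ∪ -range a) : y + v ∈ spikedHull x a b := by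
  rcases hv with ⟨i, rfl⟩ | ⟨i, hi⟩
  · obtain ⟨k, rfl⟩ := hy
    exact add_mem_spikedHull hb k i
  · obtain ⟨k, hk⟩ : -y ∈ range x := hneg.le (neg_mem_neg.2 hy)
    rw [← neg_spikedHull, mem_neg, neg_add, ← hk, ← hi]
    exact add_mem_spikedHull hb k i

theorem apply_le_of_mem_spikedHull {f : X →L[ℝ] ℝ} {M L : ℝ} (hneg : -range x = range x)
    (hM : ∀ y ∈ range x, f y ≤ M) (hL : ∀ v ∈ range a ∪ -range a ∪ (range b ∪ -range b), f v ≤ L)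
    {c : X} (hc : c ∈ spikedHull x a b) : f c ≤ M + L := by
  have hx (k : ℕ) : |f (x k)| ≤ M := abs_le'.2
    ⟨hM _ ⟨k, rfl⟩, by simpa using hM (-x k) (hneg.le (neg_mem_neg.2 ⟨k, rfl⟩))⟩
  have ha (i : ℕ) : |f (a i)| ≤ L := abs_le'.2
    ⟨hL _ (.inl (.inl ⟨i, rfl⟩)), by simpa using hL (-a i) (.inl (.inr (by simp)))⟩
  have hb (i : ℕ) : |f (b i)| ≤ L := abs_le'.2
    ⟨hL _ (.inr (.inl ⟨i, rfl⟩)), by simpa using hL (-b i) (.inr (.inr (by simp)))⟩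
  have hline (i n : ℕ) : |f (AffineMap.lineMap (a i) (b n) (1 / ((n : ℝ) + 1)))| ≤ L := by
    have hmem := (convex_closedBall (0 : ℝ) L).lineMap_mem (mem_closedBall_zero_iff.2 (ha i))
      (mem_closedBall_zero_iff.2 (hb n)) (one_div_natCast_add_one_mem_Icc n)
    rw [mem_closedBall_zero_iff] at hmem
    exact (congrArg _ (f.toLinearMap.toAffineMap.apply_lineMap _ _ _)).trans_le hmem
  have hspike (n : ℕ) : |f (spike x a b n)| ≤ M + L := by
    rw [spike, map_add]
    exact (abs_add_le _ _).trans (add_le_add (hx _) (hline _ n))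
  refine apply_le_of_mem_closedConvexHull ?_ hc
  rintro q (⟨n, rfl⟩ | ⟨n, hn⟩)
  · exact (le_abs_self _).trans (hspike n)
  · rw [← neg_neg q, ← hn, map_neg]
    exact (neg_le_abs _).trans (hspike n)

theorem exists_add_mem_sliceSet_add {D : Set X} (hx : ∀ k, ‖x k‖ ≤ 1) (hneg : -range x = range x)
    (ha : ∀ i, ‖a i‖ ≤ ρ) (hb : ∀ i, ‖b i‖ ≤ ρ) (hD : ∀ d ∈ D, ‖d‖ ≤ 1 + ρ) (hDne : D.Nonempty)
    (f : X →L[ℝ] ℝ) {ε : ℝ} (hε : 0 < ε) {v : X} (hv : v ∈ range a ∪ -range a)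
    (hmax : ∀ w ∈ range a ∪ -range a ∪ (range b ∪ -range b), f w ≤ f v + ε / 5) :
    ∃ x₀ ∈ range x, ∃ δ > 0, ∃ r, ‖r‖ ≤ 1 + 2 * ρ ∧
      ∀ y ∈ range x, f x₀ - δ < f y → y + r ∈ sliceSet (spikedHull x a b + D) f ε := by
  have hδ : 0 < ε / 5 := by positivity
  obtain ⟨x₀, hx₀, hx₀max⟩ := exists_forall_apply_le_add
    (isBounded_iff_forall_norm_le.2 ⟨1, forall_mem_range.2 hx⟩) (range_nonempty x) f hδ
  obtain ⟨d, hd, hdmax⟩ := exists_forall_apply_le_add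
    (isBounded_iff_forall_norm_le.2 ⟨1 + ρ, hD⟩) hDne f hδ
  have hvρ : ‖v‖ ≤ ρ := norm_le_of_mem_range_union_neg ha hv
  refine ⟨x₀, hx₀, ε / 5, hδ, v + d, by linarith [norm_add_le v d, hD d hd], fun y hy hfy => ?_⟩
  refine mem_sliceSet_of_forall_apply_le (M := f x₀ + f v + f d + 3 * (ε / 5)) ?_ ?_ ?_
  · rw [← add_assoc]
    exact add_mem_add (add_mem_spikedHull_of_mem_union_neg hneg hb hy hv) hd
  · rintro _ ⟨c, hc, d', hd', rfl⟩
    rw [map_add]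
    linarith [apply_le_of_mem_spikedHull hneg hx₀max hmax hc, hdmax d' hd']
  · rw [map_add, map_add]
    linarith

theorem exists_add_mem_of_isSlice_spikedHull_add_spikedHull (hx : ∀ k, ‖x k‖ ≤ 1)
    (hneg : -range x = range x) (ha : ∀ i, ‖a i‖ ≤ ρ) (hb : ∀ i, ‖b i‖ ≤ ρ) {U : Set X}
    (hU : IsSlice (spikedHull x a b + spikedHull x b a) U) :
    ∃ f : X →L[ℝ] ℝ, ∃ x₀ ∈ range x, ∃ δ > 0, ∃ r, ‖r‖ ≤ 1 + 2 * ρ ∧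
      ∀ y ∈ range x, f x₀ - δ < f y → y + r ∈ U := by
  obtain ⟨-, f, -, ε, hε, rfl⟩ := hU
  have hbounded : IsBounded (range a ∪ -range a ∪ (range b ∪ -range b)) :=
    isBounded_iff_forall_norm_le.2 ⟨ρ, fun w hw => hw.elim (norm_le_of_mem_range_union_neg ha)
      (norm_le_of_mem_range_union_neg hb)⟩
  obtain ⟨v, hv, hvmax⟩ := exists_forall_apply_le_add hbounded ⟨a 0, .inl (.inl ⟨0, rfl⟩)⟩ f
    (show 0 < ε / 5 by positivity)
  refine ⟨f, ?_⟩
  rcases hv with hva | hvb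
  · exact exists_add_mem_sliceSet_add hx hneg ha hb
      (fun d hd => norm_le_of_mem_spikedHull hx hb ha hd) ⟨_, add_mem_spikedHull ha 0 0⟩ f hε hva
      hvmax
  · rw [add_comm (spikedHull x a b)]
    exact exists_add_mem_sliceSet_add hx hneg hb ha
      (fun d hd => norm_le_of_mem_spikedHull hx ha hb hd) ⟨_, add_mem_spikedHull hb 0 0⟩ f hε hvb
      (by rwa [union_comm (range b ∪ -range b)])

theorem not_isSCD_spikedHull_add_spikedHull (hx : ∀ k, ‖x k‖ ≤ 1) (hneg : -range x = range x)
    (hD : IsDaugavetSet (range x) (Submodule.span ℝ (range x))) (ha : ∀ i, ‖a i‖ ≤ ρ)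
    (hb : ∀ i, ‖b i‖ ≤ ρ) (hρ : ρ < 1 / 2) : ¬IsSCD (spikedHull x a b + spikedHull x b a) := by
  refine hD.not_isSCD (R := 1 + 2 * ρ) (R' := 2 * ρ) (forall_mem_range.2 hx) hneg
    (fun U => exists_add_mem_of_isSlice_spikedHull_add_spikedHull hx hneg ha hb) ?_ (by linarith)
  rintro _ ⟨k, rfl⟩
  refine ⟨_, add_mem_add (add_mem_spikedHull hb k 0) (add_mem_spikedHull ha k 0), ?_⟩
  rw [show x k + a 0 + (x k + b 0) - (2 : ℝ) • x k = a 0 + b 0 by module]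
  linarith [norm_add_le (a 0) (b 0), ha 0, hb 0]

end Sums

theorem exists_symmetric_scd_sets_sum_not_scd_general
    {Y : Type*} [NormedAddCommGroup Y] [NormedSpace ℝ Y] (h : DaugavetProperty Y) :
    ∃ C₁ C₂ : Set Y,
      Convex ℝ C₁ ∧ IsClosed C₁ ∧ IsBounded C₁ ∧ C₁ = -C₁ ∧ IsSCD C₁ ∧
      Convex ℝ C₂ ∧ IsClosed C₂ ∧ IsBounded C₂ ∧ C₂ = -C₂ ∧ IsSCD C₂ ∧
      ¬ IsSCD (C₁ + C₂) := by
  obtain ⟨x, u, φ, hs⟩ := h.isDaugavetSubspace_top.exists_isDaugavetSystem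
    (show (0 : ℝ) < 1 / 10 by norm_num)
  set a := fun n => u (2 * n)
  set b := fun n => u (2 * n + 1)
  have ha (n : ℕ) : ‖a n‖ ≤ 1 / 10 := hs.norm_direction_le _
  have hb (n : ℕ) : ‖b n‖ ≤ 1 / 10 := hs.norm_direction_le _
  have hbounded {a b : ℕ → Y} (ha : ∀ n, ‖a n‖ ≤ 1 / 10) (hb : ∀ n, ‖b n‖ ≤ 1 / 10) :
      IsBounded (spikedHull x a b) := isBounded_iff_forall_norm_le.2
    ⟨_, fun _ => norm_le_of_mem_spikedHull hs.norm_point_le ha hb⟩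
  have hscd₁ : IsSCD (spikedHull x a b) := isSCD_spikedHull (φ := fun n => φ (2 * n + 1))
    hs.norm_point_le ha hb (fun _ => hs.apply_point _) (fun _ _ => hs.apply_of_ne _ _ (by omega))
    (fun _ => hs.apply_self _) fun _ _ hnm => hs.apply_of_ne _ _ (by omega)
  have hscd₂ : IsSCD (spikedHull x b a) := isSCD_spikedHull (φ := fun n => φ (2 * n))
    hs.norm_point_le hb ha (fun _ => hs.apply_point _) (fun _ _ => hs.apply_of_ne _ _ (by omega))
    (fun _ => hs.apply_self _) fun _ _ hnm => hs.apply_of_ne _ _ (by omega)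
  exact ⟨spikedHull x a b, spikedHull x b a,
    convex_closedConvexHull, isClosed_closedConvexHull, hbounded ha hb, (neg_spikedHull x a b).symm,
    hscd₁, convex_closedConvexHull, isClosed_closedConvexHull, hbounded hb ha,
    (neg_spikedHull x b a).symm, hscd₂,
    not_isSCD_spikedHull_add_spikedHull hs.norm_point_le hs.neg_range hs.isDaugavetSet ha hb
      (by norm_num)⟩

theorem exists_symmetric_scd_sets_sum_not_scd
    {Y : Type*} [NormedAddCommGroup Y] [NormedSpace ℝ Y] [CompleteSpace Y]
    (h : DaugavetProperty Y) :
    ∃ C₁ C₂ : Set Y,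
      Convex ℝ C₁ ∧ IsClosed C₁ ∧ IsBounded C₁ ∧ C₁ = -C₁ ∧ IsSCD C₁ ∧
      Convex ℝ C₂ ∧ IsClosed C₂ ∧ IsBounded C₂ ∧ C₂ = -C₂ ∧ IsSCD C₂ ∧
      ¬ IsSCD (C₁ + C₂) :=
  exists_symmetric_scd_sets_sum_not_scd_general h
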